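/- Soundness of the syntax-directed λ_SEC type system with respect to Zdancewic's declarative system: for every ascription-free λ_SEC term t, every typing context Γ and every static security type S, if Γ ⊢ t : S in the syntax-directed system then Γ ⊢^Z t : S in Zdancewic's system. -/

import Mathlib

/-!
Each syntax-directed rule is derivable in the declarative system, by induction on the derivation.
The two systems differ only at applications, where the subtyping premise becomes one use of
subsumption on the argument, and at conditionals. There `S1 ⋎ S2` is an upper bound of both branch
types (`sjoin_smeet_bounds`), and so is its stamping by the guard label (`SSub.stamp_right`);
subsumption therefore gives both branches the common type `(S1 ⋎ S2) ⊔ ℓ` that the declarative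
rule demands.
-/

/-- Static security types: S ::= Bool_ℓ | S →_ℓ S. -/
inductive SType (L : Type) where
  | bool (l : L)
  | arrow (S1 : SType L) (l : L) (S2 : SType L)

variable {L : Type} [Lattice L] [BoundedOrder L]

/-- Static subtyping. -/
inductive SSub : SType L → SType L → Prop where
  | bool {l l' : L} : l ≤ l' → SSub (.bool l) (.bool l')
  | arrow {S1 S1' S2 S2' : SType L} {l l' : L} :
      SSub S1' S1 → SSub S2 S2' → l ≤ l' →
      SSub (.arrow S1 l S2) (.arrow S1' l' S2')

/-- Label stamping on static types. -/
def SType.stamp : SType L → L → SType L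
  | .bool l, l' => .bool (l ⊔ l')
  | .arrow S1 l S2, l' => .arrow S1 (l ⊔ l') S2

mutual
/-- Partial subtyping join ⋎. -/
def sjoin : SType L → SType L → Option (SType L)
  | .bool l, .bool l' => some (.bool (l ⊔ l'))
  | .arrow S11 l S12, .arrow S21 l' S22 => do
      let m ← smeet S11 S21
      let j ← sjoin S12 S22
      pure (.arrow m (l ⊔ l') j)
  | _, _ => none
/-- Partial subtyping meet ⋏. -/
def smeet : SType L → SType L → Option (SType L)
  | .bool l, .bool l' => some (.bool (l ⊓ l'))
  | .arrow S11 l S12, .arrow S21 l' S22 => do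
      let j ← sjoin S11 S21
      let m ← smeet S12 S22
      pure (.arrow j (l ⊓ l') m)
  | _, _ => none
end
/-- Ascription-free λ_SEC terms. -/
inductive Tm (L : Type) where
  | var (x : String)
  | bool (b : Bool) (l : L)
  | lam (x : String) (S : SType L) (t : Tm L) (l : L)
  | app (t1 t2 : Tm L)
  | binop (op : Bool → Bool → Bool) (t1 t2 : Tm L)
  | ite (t1 t2 t3 : Tm L)

abbrev Ctx (L : Type) := List (String × SType L)

/-- The syntax-directed λ_SEC type system. -/
inductive SD : Ctx L → Tm L → SType L → Prop where
  | var {Γ : Ctx L} {x S} : List.lookup x Γ = some S → SD Γ (.var x) S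
  | bool {Γ : Ctx L} {b l} : SD Γ (.bool b l) (.bool l)
  | lam {Γ : Ctx L} {x S1 t S2 l} :
      SD ((x, S1) :: Γ) t S2 → SD Γ (.lam x S1 t l) (.arrow S1 l S2)
  | binop {Γ : Ctx L} {op t1 t2 l1 l2} :
      SD Γ t1 (.bool l1) → SD Γ t2 (.bool l2) →
      SD Γ (.binop op t1 t2) (.bool (l1 ⊔ l2))
  | app {Γ : Ctx L} {t1 t2 S11 l S12 S2} :
      SD Γ t1 (.arrow S11 l S12) → SD Γ t2 S2 → SSub S2 S11 →
      SD Γ (.app t1 t2) (S12.stamp l)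
  | ite {Γ : Ctx L} {t1 t2 t3 l S1 S2 Sj} :
      SD Γ t1 (.bool l) → SD Γ t2 S1 → SD Γ t3 S2 → sjoin S1 S2 = some Sj →
      SD Γ (.ite t1 t2 t3) (Sj.stamp l)

/-- Zdancewic's declarative type system, with subsumption. -/
inductive ZT : Ctx L → Tm L → SType L → Prop where
  | var {Γ : Ctx L} {x S} : List.lookup x Γ = some S → ZT Γ (.var x) S
  | bool {Γ : Ctx L} {b l} : ZT Γ (.bool b l) (.bool l)
  | lam {Γ : Ctx L} {x S1 t S2 l} :
      ZT ((x, S1) :: Γ) t S2 → ZT Γ (.lam x S1 t l) (.arrow S1 l S2)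
  | binop {Γ : Ctx L} {op t1 t2 l1 l2} :
      ZT Γ t1 (.bool l1) → ZT Γ t2 (.bool l2) →
      ZT Γ (.binop op t1 t2) (.bool (l1 ⊔ l2))
  | app {Γ : Ctx L} {t1 t2 S11 l S12} :
      ZT Γ t1 (.arrow S11 l S12) → ZT Γ t2 S11 →
      ZT Γ (.app t1 t2) (S12.stamp l)
  | ite {Γ : Ctx L} {t1 t2 t3 l} {S : SType L} :
      ZT Γ t1 (.bool l) → ZT Γ t2 (S.stamp l) → ZT Γ t3 (S.stamp l) →
      ZT Γ (.ite t1 t2 t3) (S.stamp l)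
  | sub {Γ : Ctx L} {t S' S} : ZT Γ t S' → SSub S' S → ZT Γ t S
/-- A supertype remains a supertype after stamping, since stamping only raises the outermost
label. -/
theorem SSub.stamp_right {S T : SType L} (h : SSub S T) (l : L) : SSub S (T.stamp l) := by
  cases h with
  | bool h => exact .bool (le_sup_of_le_left h)
  | arrow h1 h2 h => exact .arrow h1 h2 (le_sup_of_le_left h)

/-- `⋎` yields an upper bound and `⋏` a lower bound for subtyping. The two claims are proved
simultaneously because the contravariant domain position swaps them. -/
theorem sjoin_smeet_bounds (S : SType L) :
    (∀ T J, sjoin S T = some J → SSub S J ∧ SSub T J) ∧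
    (∀ T M, smeet S T = some M → SSub M S ∧ SSub M T) := by
  induction S with
  | bool l =>
    constructor
    · intro T J h
      cases T with
      | bool l' =>
        simp only [sjoin, Option.some.injEq] at h
        subst h
        exact ⟨.bool le_sup_left, .bool le_sup_right⟩
      | arrow => simp [sjoin] at h
    · intro T M h
      cases T with
      | bool l' =>
        simp only [smeet, Option.some.injEq] at h
        subst h
        exact ⟨.bool inf_le_left, .bool inf_le_right⟩
      | arrow => simp [smeet] at h
  | arrow S1 l S2 ih1 ih2 =>
    constructor
    · intro T J h
      cases T with
      | bool => simp [sjoin] at h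
      | arrow T1 l' T2 =>
        simp only [sjoin, Option.bind_eq_bind, Option.bind_eq_some_iff, Option.pure_def,
          Option.some.injEq] at h
        obtain ⟨m, hm, j, hj, rfl⟩ := h
        have hm' := ih1.2 _ _ hm
        have hj' := ih2.1 _ _ hj
        exact ⟨.arrow hm'.1 hj'.1 le_sup_left, .arrow hm'.2 hj'.2 le_sup_right⟩
    · intro T M h
      cases T with
      | bool => simp [smeet] at h
      | arrow T1 l' T2 =>
        simp only [smeet, Option.bind_eq_bind, Option.bind_eq_some_iff, Option.pure_def,
          Option.some.injEq] at h
        obtain ⟨j, hj, m, hm, rfl⟩ := h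
        have hj' := ih1.1 _ _ hj
        have hm' := ih2.2 _ _ hm
        exact ⟨.arrow hj'.1 hm'.1 inf_le_left, .arrow hj'.2 hm'.2 inf_le_right⟩

/-- the syntax-directed λ_SEC type system is sound with respect to
Zdancewic's declarative system. -/
theorem sd_sound_wrt_Z {L : Type} [Lattice L] [BoundedOrder L]
    (Γ : Ctx L) (t : Tm L) (S : SType L) (h : SD Γ t S) : ZT Γ t S := by
  induction h with
  | var h => exact .var h
  | bool => exact .bool
  | lam _ ih => exact .lam ih
  | binop _ _ ih1 ih2 => exact .binop ih1 ih2
  | app _ _ hs ih1 ih2 => exact .app ih1 (.sub ih2 hs)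
  | @ite _ _ _ _ l S1 _ _ _ _ _ hj ih1 ih2 ih3 =>
    have hb := (sjoin_smeet_bounds S1).1 _ _ hj
    exact .ite ih1 (.sub ih2 (hb.1.stamp_right l)) (.sub ih3 (hb.2.stamp_right l))
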